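/- Bessel-type bound for Mellin coefficients: Let c ∈ ℝ, let g be a Lebesgue probability density on (0,∞) with ‖g‖_{L^∞(x^{2c−1})} = ess sup_{x>0} g(x) x^{2c−1} < ∞, let Y be a random variable with density g, and let h : (0,∞) → ℝ satisfy E[h²(Y)] < ∞. Then ∫_ℝ |E[Y^{c−1+2πit} h(Y)]|² dt ≤ ‖g‖_{L^∞(x^{2c−1})} E[h²(Y)]. -/

import Mathlib

open MeasureTheory Set Filter
open scoped ENNReal

noncomputable section

namespace MultErr

/-- The complex power `x ↦ x^(c-1+2πit)`. -/
def cpw (c t x : ℝ) : ℂ := (x : ℂ) ^ ((c : ℂ) - 1 + 2 * Real.pi * Complex.I * (t : ℂ))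

/-- The Mellin transform `M_c[g](t) = ∫₀^∞ x^(c-1+2πit) g(x) dx` of a real-valued `g`. -/
def mellinT (c : ℝ) (g : ℝ → ℝ) (t : ℝ) : ℂ := ∫ x in Ioi (0 : ℝ), cpw c t x * (g x : ℂ)

/-- The multiplicative convolution `(f*g)(y) = ∫₀^∞ f(x) g(y/x) x⁻¹ dx`. -/
def mconv (f g : ℝ → ℝ) (y : ℝ) : ℝ := ∫ x in Ioi (0 : ℝ), f x * g (y / x) / x

/-- The weighted `L¹`-norm `‖h‖_{L¹(xᵃ)} = ∫₀^∞ |h(x)| xᵃ dx`. -/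
def wnorm1 (a : ℝ) (h : ℝ → ℝ) : ℝ := ∫ x in Ioi (0 : ℝ), |h x| * x ^ a

/-- Membership in `L¹((0,∞), xᵃ dx)`. -/
def MemW1 (a : ℝ) (h : ℝ → ℝ) : Prop := IntegrableOn (fun x => |h x| * x ^ a) (Ioi 0)

/-- Membership in `L²((0,∞), xᵃ dx)`. -/
def MemW2 (a : ℝ) (h : ℝ → ℝ) : Prop := IntegrableOn (fun x => h x ^ 2 * x ^ a) (Ioi 0)

/-- The weighted `L^∞`-norm `ess sup_{x>0} |h(x)| xᵃ`, valued in `ℝ≥0∞`. -/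
def wnormInf (a : ℝ) (h : ℝ → ℝ) : ℝ≥0∞ :=
  essSup (fun x => ENNReal.ofReal (|h x| * x ^ a)) (volume.restrict (Ioi 0))

/-- Real-valued weighted `L^∞`-norm. -/
def wnormInfR (a : ℝ) (h : ℝ → ℝ) : ℝ := (wnormInf a h).toReal

/-- A Lebesgue probability density on `(0,∞)`. -/
def IsDensity (h : ℝ → ℝ) : Prop :=
  (∀ x, 0 ≤ h x) ∧ (∀ x ≤ (0 : ℝ), h x = 0) ∧ IntegrableOn h (Ioi 0) ∧
    (∫ x in Ioi (0 : ℝ), h x) = 1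

/-- The class `𝔻`: densities on `(0,∞)` lying in `L¹(x^(c-1)) ∩ L²(x^(2c-1))`. -/
def regD (c : ℝ) (h : ℝ → ℝ) : Prop := IsDensity h ∧ MemW1 (c - 1) h ∧ MemW2 (2 * c - 1) h

/-- A measurable symmetric probability density on `ℝ`. -/
def IsSymmDensity (w : ℝ → ℝ) : Prop :=
  Measurable w ∧ (∀ t, 0 ≤ w t) ∧ (∀ t, w (-t) = w t) ∧ Integrable w ∧ (∫ t : ℝ, w t) = 1

/-- `ess sup_t 1_{[-k,k]}(t) w(t)/|M_c[φ](t)|`, valued in `ℝ≥0∞`. -/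
def winf (c k : ℝ) (w φ : ℝ → ℝ) : ℝ≥0∞ :=
  essSup (fun t => ENNReal.ofReal ((Icc (-k) k).indicator
    (fun t => w t / ‖mellinT c φ t‖) t)) volume

/-- `L_γ = 1 - log γ`. -/
def Lq (γ : ℝ) : ℝ := 1 - Real.log γ

/-- `Δ₄(k) = ∫_{-k}^k w⁴(t)/|M_c[φ](t)|⁴ dt`. -/
def Δ4 (c k : ℝ) (w φ : ℝ → ℝ) : ℝ :=
  ∫ t in Icc (-k) k, w t ^ 4 / ‖mellinT c φ t‖ ^ 4

/-- `Δ∞(k) = ‖1_{[-k,k]} w/M_c[φ]‖_∞⁴`. -/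
def Δinf (c k : ℝ) (w φ : ℝ → ℝ) : ℝ := (winf c k w φ).toReal ^ 4

/-- `c_φ = (‖φ‖_{L^∞(x^{2c-1})}/‖φ‖_{L¹(x^{2(c-1)})}) ∨ 1`. -/
def cphi (c : ℝ) (φ : ℝ → ℝ) : ℝ := max (wnormInfR (2 * c - 1) φ / wnorm1 (2 * (c - 1)) φ) 1

/-- `V_{h|φ} = ‖h*φ‖_{L¹(x^{2(c-1)})} ∨ 1`. -/
def Vc (c : ℝ) (h φ : ℝ → ℝ) : ℝ := max (wnorm1 (2 * (c - 1)) (mconv h φ)) 1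

/-- `V⁽²⁾_{h|φ} = ‖h*φ‖_{L¹(x^{4(c-1)})} ∨ 1`. -/
def V2c (c : ℝ) (h φ : ℝ → ℝ) : ℝ := max (wnorm1 (4 * (c - 1)) (mconv h φ)) 1

/-- `V_{h|φ}(p) = ‖h*φ‖_{L¹(x^{2p(c-1)})} ∨ 1`. -/
def Vpc (c p : ℝ) (h φ : ℝ → ℝ) : ℝ := max (wnorm1 (2 * p * (c - 1)) (mconv h φ)) 1

/-- `q_k²(h) = ∫_{-k}^k |M_c[h](t)|² w²(t) dt`. -/
def qk2 (c k : ℝ) (w h : ℝ → ℝ) : ℝ :=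
  ∫ t in Icc (-k) k, ‖mellinT c h t‖ ^ 2 * w t ^ 2

/-- `q²(h) = ∫_ℝ |M_c[h](t)|² w²(t) dt`. -/
def q2 (c : ℝ) (w h : ℝ → ℝ) : ℝ :=
  ∫ t : ℝ, ‖mellinT c h t‖ ^ 2 * w t ^ 2

/-- The weight `w²(t)/|M_c[φ](t)|²`. -/
def wgt (c : ℝ) (w φ : ℝ → ℝ) (t : ℝ) : ℝ := w t ^ 2 / ‖mellinT c φ t‖ ^ 2

variable {Ω : Type*} [MeasurableSpace Ω]

/-- The U-part `T̂_k` of the test statistic. -/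
def That (c k : ℝ) (w φ : ℝ → ℝ) {n : ℕ} (Y : Fin n → Ω → ℝ) (ω : Ω) : ℂ :=
  ((n : ℂ) * ((n : ℂ) - 1))⁻¹ *
    ∑ j : Fin n, ∑ l : Fin n,
      if j ≠ l then
        ∫ t in Icc (-k) k, cpw c t (Y j ω) * cpw c (-t) (Y l ω) * (wgt c w φ t : ℂ)
      else 0

/-- The linear part `Ŝ_k` of the test statistic. -/
def Shat (c k : ℝ) (w φ f₀ : ℝ → ℝ) {n : ℕ} (Y : Fin n → Ω → ℝ) (ω : Ω) : ℂ :=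
  (n : ℂ)⁻¹ * ∑ j : Fin n,
    ∫ t in Icc (-k) k,
      cpw c t (Y j ω) * (starRingEnd ℂ) (mellinT c (mconv f₀ φ) t) * (wgt c w φ t : ℂ)

/-- The test statistic `q̂_k² = T̂_k - 2Ŝ_k + q_k²(f₀)`. -/
def qhat (c k : ℝ) (w φ f₀ : ℝ → ℝ) {n : ℕ} (Y : Fin n → Ω → ℝ) (ω : Ω) : ℝ :=
  (That c k w φ Y ω - 2 * Shat c k w φ f₀ Y ω).re + qk2 c k w f₀

/-- The critical value `τ_k(α)`. -/
def τcrit (c k α : ℝ) (w φ f₀ : ℝ → ℝ) (n : ℕ) : ℝ :=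
  (18 * cphi c φ * V2c c f₀ φ
      + 69493 * (Real.sqrt (2 * k) / (n : ℝ)) * (Lq (α / 2) / α)) *
    Real.sqrt (Lq (α / 2)) * Real.sqrt (Δ4 c k w φ) / (n : ℝ)
  + 52 * Vc c f₀ φ * cphi c φ * Lq (α / 2) * Real.sqrt (Δinf c k w φ) / (n : ℝ)

/-- `Y₁,…,Y_n` are i.i.d. with Lebesgue density `g`. -/
def IID (P : Measure Ω) {n : ℕ} (Y : Fin n → Ω → ℝ) (g : ℝ → ℝ) : Prop :=
  ProbabilityTheory.iIndepFun (m := fun _ : Fin n => (inferInstance : MeasurableSpace ℝ)) Y P ∧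
  ∀ j, Measurable (Y j) ∧
    Measure.map (Y j) P = (volume : Measure ℝ).withDensity (fun y => ENNReal.ofReal (g y))


/-- Regularity-function assumptions: `s ≥ 1` symmetric non-decreasing with `s(t) → ∞`,
and `w/s` symmetric non-increasing with `w(t)/s(t) → 0` as `|t| → ∞`. -/
def RegFun (w s : ℝ → ℝ) : Prop :=
  (∀ t, 1 ≤ s t) ∧ (∀ t, s (-t) = s t) ∧ MonotoneOn s (Ici 0) ∧
    Tendsto s atTop atTop ∧
    (∀ t, w (-t) / s (-t) = w t / s t) ∧ AntitoneOn (fun t => w t / s t) (Ici 0) ∧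
    Tendsto (fun t => w t / s t) atTop (nhds 0)

/-- Membership in the regularity class `E_s^R`. -/
def inEs (c R : ℝ) (s h : ℝ → ℝ) : Prop :=
  MemW1 (c - 1) h ∧ MemW2 (2 * c - 1) h ∧
    (∫ t : ℝ, s t ^ 2 * ‖mellinT c h t‖ ^ 2) ≤ R ^ 2

/-- Membership in the class `D_v` of densities with uniformly bounded moment constant. -/
def inDv (c v : ℝ) (φ h : ℝ → ℝ) : Prop :=
  regD c h ∧ MemW1 (4 * (c - 1)) h ∧ V2c c h φ ≤ v

/-- `ρ_{k,s}² = (w²(k)/s²(k)) ∨ (1/n)(√Δ₄(k) ∨ √Δ∞(k))`. -/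
def ρks2 (c : ℝ) (w φ s : ℝ → ℝ) (k : ℝ) (n : ℕ) : ℝ :=
  max (w k ^ 2 / s k ^ 2)
    ((1 / (n : ℝ)) * max (Real.sqrt (Δ4 c k w φ)) (Real.sqrt (Δinf c k w φ)))

/-- `η_k² = 1 ∨ √(2k)/(dn)`. -/
def ηk2 (k d : ℝ) (n : ℕ) : ℝ := max 1 (Real.sqrt (2 * k) / (d * (n : ℝ)))

/-- The Bonferroni-corrected critical value `τ_{k|α}` for a collection of cardinality `m`. -/
def τbon (c k α : ℝ) (m : ℕ) (p : ℝ) (w φ f₀ : ℝ → ℝ) (n : ℕ) : ℝ :=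
  (18 * cphi c φ * Vpc c p f₀ φ
      + 69493 * (Real.sqrt (2 * k) * (m : ℝ) ^ ((1 : ℝ) / (p - 1)) / (n : ℝ))
          * (Lq (α / (2 * (m : ℝ))) ^ 2 / α)) *
    Real.sqrt (Lq (α / (2 * (m : ℝ)))) * Real.sqrt (Δ4 c k w φ) / (n : ℝ)
  + 52 * Vc c f₀ φ * cphi c φ * Lq (α / (2 * (m : ℝ))) * Real.sqrt (Δinf c k w φ) / (n : ℝ)

/-- The adaptive factor `δ_𝒦 = (1 + log |𝒦|)^{-1/2}`. -/
def δK (m : ℕ) : ℝ := (1 + Real.log (m : ℝ)) ^ (-(1 : ℝ) / 2)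

/-- `r_{k,s}² = (w²(k)/s²(k)) ∨ (1/n)(δ_𝒦⁻¹ √Δ₄(k) ∨ δ_𝒦⁻² √Δ∞(k))`. -/
def rks2 (c : ℝ) (w φ s : ℝ → ℝ) (k : ℝ) (m n : ℕ) : ℝ :=
  max (w k ^ 2 / s k ^ 2)
    ((1 / (n : ℝ)) * max ((δK m)⁻¹ * Real.sqrt (Δ4 c k w φ))
        (((δK m)⁻¹) ^ 2 * Real.sqrt (Δinf c k w φ)))

/-- `η_{𝒦,s}² = 1 ∨ √(2k₀)|𝒦|^{1/(p-1)}/(dn δ_𝒦⁴)`. -/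
def ηKs2 (k₀ : ℝ) (m : ℕ) (p d : ℝ) (n : ℕ) : ℝ :=
  max 1 (Real.sqrt (2 * k₀) * (m : ℝ) ^ ((1 : ℝ) / (p - 1)) / (d * (n : ℝ) * δK m ^ 4))

/-- The truncated complex power `b(y,t) = 1_{[0,δ]}(y^{c-1}) y^{c-1+2πit}`. -/
def bfun (c δ : ℝ) (y t : ℝ) : ℂ := if y ^ (c - 1) ∈ Icc (0 : ℝ) δ then cpw c t y else 0

/-- `E[b(Y,t)]` for `Y` with density `g` on `(0,∞)`. -/
def Ebfun (c δ : ℝ) (g : ℝ → ℝ) (t : ℝ) : ℂ := ∫ y in Ioi (0 : ℝ), bfun c δ y t * (g y : ℂ)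

/-- The bounded kernel `h_k^b`. -/
def hkb (c δ k : ℝ) (w φ g : ℝ → ℝ) (x y : ℝ) : ℂ :=
  ∫ t in Icc (-k) k,
    (bfun c δ y t - Ebfun c δ g t) * (bfun c δ x (-t) - Ebfun c δ g (-t)) * (wgt c w φ t : ℂ)

/-- `ṽ(x,t) = x^{c-1+2πit} - E[Y^{c-1+2πit}]` for `Y` with density `g`. -/
def vtil (c : ℝ) (g : ℝ → ℝ) (x t : ℝ) : ℂ := cpw c t x - mellinT c g t

/-- The full (unbounded) kernel `h_k` of the canonical U-statistic. -/
def hkfull (c k : ℝ) (w φ g : ℝ → ℝ) (x y : ℝ) : ℂ :=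
  ∫ t in Icc (-k) k, vtil c g x t * vtil c g y (-t) * (wgt c w φ t : ℂ)

variable {Ω' : Type*} [MeasurableSpace Ω']

/-- The U-statistic with kernel `h` built from the sample `Y`. -/
def Ustat (h : ℝ → ℝ → ℂ) {n : ℕ} (Y : Fin n → Ω' → ℝ) (ω : Ω') : ℂ :=
  ((n : ℂ) * ((n : ℂ) - 1))⁻¹ *
    ∑ j : Fin n, ∑ l : Fin n, if j ≠ l then h (Y j ω) (Y l ω) else 0

/-- The centred linear statistic `W_k` (with `g = f*φ` and `g₀ = f₀*φ`). -/
def Wstat (c k : ℝ) (w φ g g₀ : ℝ → ℝ) {n : ℕ} (Y : Fin n → Ω' → ℝ) (ω : Ω') : ℂ :=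
  (n : ℂ)⁻¹ * ∑ j : Fin n,
    ∫ t in Icc (-k) k,
      vtil c g (Y j ω) t * (starRingEnd ℂ) (mellinT c g t - mellinT c g₀ t) * (wgt c w φ t : ℂ)

/-- Mellin transform of a complex-valued function. -/
def mellinTC (c : ℝ) (g : ℝ → ℂ) (t : ℝ) : ℂ := ∫ x in Ioi (0 : ℝ), cpw c t x * g x

/-- Multiplicative convolution of complex-valued functions. -/
def mconvC (f g : ℝ → ℂ) (y : ℝ) : ℂ := ∫ x in Ioi (0 : ℝ), f x * g (y / x) / (x : ℂ)

/-- Weighted `L¹`-norm of a complex-valued function. -/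
def wnorm1C (a : ℝ) (h : ℝ → ℂ) : ℝ := ∫ x in Ioi (0 : ℝ), ‖h x‖ * x ^ a

/-- Membership in `L¹((0,∞), xᵃ dx)` for complex-valued functions. -/
def MemW1C (a : ℝ) (h : ℝ → ℂ) : Prop :=
  AEStronglyMeasurable h (volume.restrict (Ioi 0)) ∧
    IntegrableOn (fun x => ‖h x‖ * x ^ a) (Ioi 0)

/-- Weighted `L²`-norm of a complex-valued function. -/
def wnorm2C (a : ℝ) (h : ℝ → ℂ) : ℝ :=
  Real.sqrt (∫ x in Ioi (0 : ℝ), ‖h x‖ ^ 2 * x ^ a)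

/-- Membership in `L²((0,∞), xᵃ dx)` for complex-valued functions. -/
def MemW2C (a : ℝ) (h : ℝ → ℂ) : Prop :=
  AEStronglyMeasurable h (volume.restrict (Ioi 0)) ∧
    IntegrableOn (fun x => ‖h x‖ ^ 2 * x ^ a) (Ioi 0)

/-- Weighted `L^∞`-norm of a complex-valued function, valued in `ℝ≥0∞`. -/
def wnormInfC (a : ℝ) (h : ℝ → ℂ) : ℝ≥0∞ :=
  essSup (fun x => ENNReal.ofReal (‖h x‖ * x ^ a)) (volume.restrict (Ioi 0))


/-!
Substituting `y = exp (-u)` turns the Mellin transform of `f` along the line `Re s = c` into the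
Fourier transform of `u ↦ exp (-c u) f (exp (-u))`, so Plancherel bounds its squared `L²` norm by
`∫ |f y|² y ^ (2c - 1) dy`. For `f = g h` one factor `g y * y ^ (2c - 1)` is at most its essential
supremum, and what remains is `∫ |h y|² g y dy`. Estimating with lower Lebesgue integrals in
`[0, ∞]` leaves no integrability to check until the very end.
-/

lemma ofReal_integral_norm_sq_le {α E : Type*} [MeasurableSpace α] {μ : Measure α}
    [SeminormedAddCommGroup E] (f : α → E) :
    ENNReal.ofReal (∫ x, ‖f x‖ ^ 2 ∂μ) ≤ ∫⁻ x, ‖f x‖ₑ ^ 2 ∂μ := by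
  rw [← Real.enorm_of_nonneg (integral_nonneg fun x ↦ by positivity)]
  exact (enorm_integral_le_lintegral_enorm _).trans_eq
    (lintegral_congr fun x ↦ by rw [enorm_pow, enorm_norm])

section Plancherel

open scoped FourierTransform SchwartzMap ContDiff

variable {V F : Type*} [NormedAddCommGroup V] [InnerProductSpace ℝ V] [FiniteDimensional ℝ V]
  [MeasurableSpace V] [BorelSpace V] [NormedAddCommGroup F]

lemma continuous_fourier_of_integrable [NormedSpace ℂ F] {f : V → F} (hf : Integrable f) :
    Continuous (𝓕 f) :=
  VectorFourier.fourierIntegral_continuous Real.continuous_fourierChar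
    (innerSL ℝ).continuous₂ hf

lemma integral_fourier_smul_eq_of_integrable [NormedSpace ℂ F] [CompleteSpace F] {φ : V → ℂ}
    {f : V → F} (hφ : Integrable φ) (hf : Integrable f) :
    ∫ ξ, 𝓕 φ ξ • f ξ = ∫ x, φ x • 𝓕 f x := by
  have := VectorFourier.integral_fourierIntegral_smul_eq_flip (L := innerₗ V)
    Real.continuous_fourierChar (innerSL ℝ).continuous₂ hφ hf
  rwa [flip_innerₗ] at this

variable [InnerProductSpace ℂ F] [CompleteSpace F]

lemma integral_smul_fourier_toLp {f : V → F} (hf₁ : Integrable f) (hf₂ : MemLp f 2 volume)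
    (φ : 𝓢(V, ℂ)) : ∫ x, φ x • (𝓕 (hf₂.toLp f) : Lp F 2 volume) x = ∫ x, φ x • 𝓕 f x := by
  calc ∫ x, φ x • (𝓕 (hf₂.toLp f) : Lp F 2 volume) x
      = ((𝓕 (hf₂.toLp f) : Lp F 2 volume) : 𝓢'(V, F)) φ :=
        (Lp.toTemperedDistribution_apply _ φ).symm
    _ = (hf₂.toLp f : 𝓢'(V, F)) (𝓕 φ) := by
      rw [← Lp.fourier_toTemperedDistribution_eq, TemperedDistribution.fourier_apply]
    _ = ∫ ξ, (𝓕 φ) ξ • hf₂.toLp f ξ := Lp.toTemperedDistribution_apply _ _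
    _ = ∫ ξ, 𝓕 (φ : V → ℂ) ξ • f ξ := by
      rw [SchwartzMap.fourier_coe]
      refine integral_congr_ae ?_
      filter_upwards [hf₂.coeFn_toLp] with ξ hξ
      rw [hξ]
    _ = ∫ x, φ x • 𝓕 f x := integral_fourier_smul_eq_of_integrable φ.integrable hf₁

lemma coeFn_fourier_toLp {f : V → F} (hf₁ : Integrable f) (hf₂ : MemLp f 2 volume) :
    (𝓕 (hf₂.toLp f) : Lp F 2 volume) =ᵐ[volume] 𝓕 f := by
  refine ae_eq_of_integral_contDiff_smul_eq ((Lp.memLp _).locallyIntegrable one_le_two)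
    (continuous_fourier_of_integrable hf₁).locallyIntegrable fun φ hφ hφc ↦ ?_
  have hφc' : HasCompactSupport (Complex.ofRealCLM ∘ φ) := hφc.comp_left rfl
  have hφ' : ContDiff ℝ ∞ (Complex.ofRealCLM ∘ φ) := by fun_prop
  simpa using integral_smul_fourier_toLp hf₁ hf₂ (hφc'.toSchwartzMap hφ')

theorem eLpNorm_fourier_eq {f : V → F} (hf₁ : Integrable f) (hf₂ : MemLp f 2 volume) :
    eLpNorm (𝓕 f) 2 volume = eLpNorm f 2 volume := by
  rw [← eLpNorm_congr_ae (coeFn_fourier_toLp hf₁ hf₂), ← eLpNorm_congr_ae hf₂.coeFn_toLp,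
    ← Lp.enorm_def, ← Lp.enorm_def, ← ofReal_norm, Lp.norm_fourier_eq, ofReal_norm]

-- If `f` is not integrable then `𝓕 f = 0`, and if `f` is not in `L²` the right side is `∞`.
theorem eLpNorm_fourier_le (f : V → F) : eLpNorm (𝓕 f) 2 volume ≤ eLpNorm f 2 volume := by
  by_cases hf₁ : Integrable f
  · obtain hf₂ | hf₂ := eq_or_ne (eLpNorm f 2 volume) ⊤
    · exact hf₂ ▸ le_top
    · exact (eLpNorm_fourier_eq hf₁ ⟨hf₁.aestronglyMeasurable, hf₂.lt_top⟩).le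
  · have hzero : 𝓕 f = 0 := by
      ext ξ
      exact integral_undef (mt (Real.fourierIntegral_convergent_iff ξ).1 hf₁)
    simp [hzero]

theorem lintegral_enorm_fourier_sq_le (f : V → F) :
    ∫⁻ ξ, ‖𝓕 f ξ‖ₑ ^ 2 ≤ ∫⁻ x, ‖f x‖ₑ ^ 2 := by
  have hsq (u : V → F) : ∫⁻ x, ‖u x‖ₑ ^ 2 = eLpNorm u 2 volume ^ 2 := by
    simpa using (eLpNorm_nnreal_pow_eq_lintegral (f := u) (μ := volume) two_ne_zero).symm
  rw [hsq, hsq]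
  gcongr
  exact eLpNorm_fourier_le f

end Plancherel

section Mellin

variable {E : Type*} [NormedAddCommGroup E]

lemma lintegral_Ioi_eq_lintegral_exp_neg (φ : ℝ → ℝ≥0∞) :
    ∫⁻ y in Ioi 0, φ y = ∫⁻ u : ℝ, ENNReal.ofReal (Real.exp (-u)) * φ (Real.exp (-u)) := by
  have himage : (fun u : ℝ ↦ Real.exp (-u)) '' univ = Ioi 0 := by
    rw [image_univ, ← Real.range_exp]
    exact neg_surjective.range_comp Real.exp
  have hderiv (u : ℝ) (_ : u ∈ univ) :
      HasDerivWithinAt (fun u ↦ Real.exp (-u)) (-Real.exp (-u)) univ u := by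
    simpa using ((hasDerivAt_neg u).exp).hasDerivWithinAt (s := univ)
  have hinj : InjOn (fun u : ℝ ↦ Real.exp (-u)) univ :=
    (Real.exp_injective.comp neg_injective).injOn
  rw [← himage, lintegral_image_eq_lintegral_abs_deriv_mul .univ hderiv hinj, setLIntegral_univ]
  simp only [abs_neg, Real.abs_exp]

lemma mellin_vertical_line_eq_fourier [NormedSpace ℂ E] (f : ℝ → E) (c t : ℝ) :
    mellin f (c + 2 * Real.pi * Complex.I * t) =
      FourierTransform.fourier (fun u : ℝ ↦ Real.exp (-c * u) • f (Real.exp (-u))) t := by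
  have him : 2 * Real.pi * t / (2 * Real.pi) = t := by field_simp
  simp [mellin_eq_fourier, him]

lemma integral_cpw_smul_eq_mellin [NormedSpace ℂ E] (f : ℝ → E) (c t : ℝ) :
    ∫ y in Ioi 0, cpw c t y • f y = mellin f (c + 2 * Real.pi * Complex.I * t) := by
  simp only [cpw, mellin, sub_add_eq_add_sub]

lemma lintegral_rpow_mul_enorm_smul_sq_le [NormedSpace ℝ E] {g : ℝ → ℝ} {h : ℝ → E} (a : ℝ)
    (hg : AEStronglyMeasurable g (volume.restrict (Ioi 0)))
    (hh : AEStronglyMeasurable h (volume.restrict (Ioi 0))) :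
    ∫⁻ y in Ioi 0, ENNReal.ofReal (y ^ a) * ‖g y • h y‖ₑ ^ 2 ≤
      wnormInf a g * ∫⁻ y in Ioi 0, ‖h y‖ₑ ^ 2 * ‖g y‖ₑ := by
  rw [← lintegral_const_mul'' _ (by fun_prop)]
  refine lintegral_mono_ae ?_
  filter_upwards [ENNReal.ae_le_essSup fun y ↦ ENNReal.ofReal (|g y| * y ^ a)] with y hy
  calc ENNReal.ofReal (y ^ a) * ‖g y • h y‖ₑ ^ 2
      = ENNReal.ofReal (|g y| * y ^ a) * (‖h y‖ₑ ^ 2 * ‖g y‖ₑ) := by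
        rw [enorm_smul, ENNReal.ofReal_mul (abs_nonneg _), ← Real.enorm_eq_ofReal_abs]
        ring
    _ ≤ wnormInf a g * (‖h y‖ₑ ^ 2 * ‖g y‖ₑ) := by gcongr; exact hy

variable [InnerProductSpace ℂ E] [CompleteSpace E]

theorem lintegral_enorm_mellin_sq_le (f : ℝ → E) (c : ℝ) :
    ∫⁻ t : ℝ, ‖mellin f (c + 2 * Real.pi * Complex.I * t)‖ₑ ^ 2 ≤
      ∫⁻ y in Ioi 0, ENNReal.ofReal (y ^ (2 * c - 1)) * ‖f y‖ₑ ^ 2 := by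
  have hexp (u : ℝ) : Real.exp (-c * u) ^ 2 =
      Real.exp (-u) * Real.exp (-u) ^ (2 * c - 1) := by
    rw [← Real.exp_mul, ← Real.exp_add, ← Real.exp_nat_mul]
    ring_nf
  calc ∫⁻ t : ℝ, ‖mellin f (c + 2 * Real.pi * Complex.I * t)‖ₑ ^ 2
      ≤ ∫⁻ u : ℝ, ‖Real.exp (-c * u) • f (Real.exp (-u))‖ₑ ^ 2 := by
        simp only [mellin_vertical_line_eq_fourier]
        exact lintegral_enorm_fourier_sq_le _
    _ = ∫⁻ u : ℝ, ENNReal.ofReal (Real.exp (-u)) *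
          (ENNReal.ofReal (Real.exp (-u) ^ (2 * c - 1)) * ‖f (Real.exp (-u))‖ₑ ^ 2) := by
        refine lintegral_congr fun u ↦ ?_
        rw [enorm_smul, mul_pow, Real.enorm_of_nonneg (Real.exp_pos _).le,
          ← ENNReal.ofReal_pow (Real.exp_pos _).le, hexp,
          ENNReal.ofReal_mul (Real.exp_pos _).le, mul_assoc]
    _ = ∫⁻ y in Ioi 0, ENNReal.ofReal (y ^ (2 * c - 1)) * ‖f y‖ₑ ^ 2 :=
        (lintegral_Ioi_eq_lintegral_exp_neg
          fun y ↦ ENNReal.ofReal (y ^ (2 * c - 1)) * ‖f y‖ₑ ^ 2).symm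

theorem lintegral_enorm_mellin_smul_sq_le {g : ℝ → ℝ} {h : ℝ → E} (c : ℝ)
    (hg : AEStronglyMeasurable g (volume.restrict (Ioi 0)))
    (hh : AEStronglyMeasurable h (volume.restrict (Ioi 0))) :
    ∫⁻ t : ℝ, ‖mellin (fun y ↦ g y • h y) (c + 2 * Real.pi * Complex.I * t)‖ₑ ^ 2 ≤
      wnormInf (2 * c - 1) g * ∫⁻ y in Ioi 0, ‖h y‖ₑ ^ 2 * ‖g y‖ₑ :=
  (lintegral_enorm_mellin_sq_le _ c).trans (lintegral_rpow_mul_enorm_smul_sq_le _ hg hh)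

theorem bessel_bound_mellin_coefficients_general (c : ℝ) {g : ℝ → ℝ} {h : ℝ → E}
    (hg : AEStronglyMeasurable g (volume.restrict (Ioi 0)))
    (hginf : wnormInf (2 * c - 1) g ≠ ⊤)
    (hh : AEStronglyMeasurable h (volume.restrict (Ioi 0)))
    (hL2 : IntegrableOn (fun y ↦ ‖h y‖ ^ 2 * |g y|) (Ioi 0)) :
    ∫ t : ℝ, ‖∫ y in Ioi 0, cpw c t y • g y • h y‖ ^ 2 ≤
      wnormInfR (2 * c - 1) g * ∫ y in Ioi 0, ‖h y‖ ^ 2 * |g y| := by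
  have hnonneg : 0 ≤ ∫ y in Ioi 0, ‖h y‖ ^ 2 * |g y| := integral_nonneg fun y ↦ by positivity
  have hmoment : ∫⁻ y in Ioi 0, ‖h y‖ₑ ^ 2 * ‖g y‖ₑ =
      ENNReal.ofReal (∫ y in Ioi 0, ‖h y‖ ^ 2 * |g y|) := by
    rw [ofReal_integral_eq_lintegral_ofReal hL2 (.of_forall fun y ↦ by positivity)]
    refine lintegral_congr fun y ↦ ?_
    rw [ENNReal.ofReal_mul (by positivity), ENNReal.ofReal_pow (norm_nonneg _), ofReal_norm,
      Real.enorm_eq_ofReal_abs]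
  simp only [integral_cpw_smul_eq_mellin]
  refine (ENNReal.ofReal_le_ofReal_iff (mul_nonneg ENNReal.toReal_nonneg hnonneg)).1 ?_
  calc ENNReal.ofReal
        (∫ t : ℝ, ‖mellin (fun y ↦ g y • h y) (c + 2 * Real.pi * Complex.I * t)‖ ^ 2)
      ≤ ∫⁻ t : ℝ, ‖mellin (fun y ↦ g y • h y) (c + 2 * Real.pi * Complex.I * t)‖ₑ ^ 2 :=
        ofReal_integral_norm_sq_le _
    _ ≤ wnormInf (2 * c - 1) g * ∫⁻ y in Ioi 0, ‖h y‖ₑ ^ 2 * ‖g y‖ₑ :=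
        lintegral_enorm_mellin_smul_sq_le c hg hh
    _ = ENNReal.ofReal (wnormInfR (2 * c - 1) g * ∫ y in Ioi 0, ‖h y‖ ^ 2 * |g y|) := by
        rw [hmoment, wnormInfR, ENNReal.ofReal_mul ENNReal.toReal_nonneg,
          ENNReal.ofReal_toReal hginf]

end Mellin

/-- Lemma A.4 (iii): Bessel-type bound for Mellin coefficients: for a random
variable `Y` with density `g` on `(0,∞)` satisfying `‖g‖_{L^∞(x^{2c-1})} < ∞` and a real-valued
`h` with `E[h²(Y)] < ∞`,
`∫_ℝ |E[Y^{c-1+2πit} h(Y)]|² dt ≤ ‖g‖_{L^∞(x^{2c-1})} E[h²(Y)]`. -/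
theorem bessel_bound_mellin_coefficients
    (c : ℝ) (g : ℝ → ℝ) (hg : IsDensity g)
    (hginf : wnormInf (2 * c - 1) g ≠ ⊤)
    (h : ℝ → ℝ)
    (hmeas : AEStronglyMeasurable h (volume.restrict (Ioi 0)))
    (hL2 : IntegrableOn (fun y => h y ^ 2 * g y) (Ioi 0)) :
    (∫ t : ℝ, ‖∫ y in Ioi (0 : ℝ), cpw c t y * ((h y * g y : ℝ) : ℂ)‖ ^ 2)
      ≤ wnormInfR (2 * c - 1) g * ∫ y in Ioi (0 : ℝ), h y ^ 2 * g y := by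
  simpa [abs_of_nonneg (hg.1 _), mul_comm] using bessel_bound_mellin_coefficients_general c
    hg.2.2.1.aestronglyMeasurable hginf (Complex.continuous_ofReal.comp_aestronglyMeasurable hmeas)
    (by simpa [abs_of_nonneg (hg.1 _)] using hL2)

end MultErr
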